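/- Let γ > 1 be a real number and let n be a positive integer with n + 1 > 2γ. Let N = {1,…,2n}, R = {1,…,n}, and for each r ∈ R let C_r = { {1}, {r+1}, {n+2}, {n+3}, …, {2n} } (a family of singletons). Fix f > 0 and let X̄ = { x ∈ [0,1]^{2n} : ∑_{j=1}^{2n} x_j ≤ 2 }. With 𝒜 = {⋃_{r∈R} S_r : S_r ∈ C_r}, v^agg(x) = sup{ f·y : y ∈ [0,1], ∑_{j∈S} x_j ≥ y for every S ∈ 𝒜 }, and v^disagg(x) = sup{ f·∑_{r∈R} z_r : z ∈ [0,1]^R, ∑_r z_r ≤ 1, ∑_{j∈S} x_j ≥ z_r for every r ∈ R, S ∈ C_r }, it holds that γ · sup_{x∈X̄} v^agg(x) ≤ sup_{x∈X̄} v^disagg(x). -/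

import Mathlib

/-- The aggregated family `𝒜 = {⋃_{r∈R} S_r : S_r ∈ C_r for each r ∈ R}`. -/
def aggFamily {N R : Type*} [DecidableEq N] [Fintype R]
    (C : R → Finset (Finset N)) : Set (Finset N) :=
  {A | ∃ g : R → Finset N, (∀ r, g r ∈ C r) ∧ A = Finset.univ.sup g}

/-- `v^disagg(x) = sup{ f·∑_r z_r : z ∈ [0,1]^R, ∑_r z_r ≤ 1,
`∑_{j∈S} x_j ≥ z_r` for every `r ∈ R` and `S ∈ C_r }`. -/
noncomputable def vdisagg {N R : Type*} [Fintype R]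
    (C : R → Finset (Finset N)) (f : ℝ) (x : N → ℝ) : ℝ :=
  sSup {t | ∃ z : R → ℝ,
    (∀ r, z r ∈ Set.Icc (0 : ℝ) 1) ∧ (∑ r, z r) ≤ 1 ∧
    (∀ r, ∀ S ∈ C r, z r ≤ ∑ j ∈ S, x j) ∧
    t = f * ∑ r, z r}

/-- `v^agg(x) = sup{ f·y : y ∈ [0,1], ∑_{j∈S} x_j ≥ y for every S ∈ 𝒜 }`. -/
noncomputable def vagg {N : Type*} (A : Set (Finset N)) (f : ℝ) (x : N → ℝ) : ℝ :=
  sSup {t | ∃ y : ℝ, y ∈ Set.Icc (0 : ℝ) 1 ∧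
    (∀ S ∈ A, y ≤ ∑ j ∈ S, x j) ∧ t = f * y}

/-- The instance of Proposition 4(i): nodes `N = {1,…,2n}` (labelled by naturals),
demands indexed by `r ∈ R = {1,…,n}` (modelled as `Fin n`, with `r ↦ r.val + 1`), and
`C_r = { {1}, {r+1}, {n+2}, {n+3}, …, {2n} }`, a family of singletons. -/
def C1 (n : ℕ) : Fin n → Finset (Finset ℕ) := fun r =>
  insert {1} (insert {(r : ℕ) + 2}
    ((Finset.Icc (n + 2) (2 * n)).image fun k => ({k} : Finset ℕ)))

/-- The aggregated family contains every set that is common to all the families `C r`. -/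
theorem mem_aggFamily_of_forall_mem {N R : Type*} [DecidableEq N] [Fintype R] [Nonempty R]
    {C : R → Finset (Finset N)} {S : Finset N} (hS : ∀ r, S ∈ C r) : S ∈ aggFamily C :=
  ⟨fun _ => S, hS, (Finset.sup_const Finset.univ_nonempty S).symm⟩

theorem Icc_mem_aggFamily_C1 (n : ℕ) : Finset.Icc 2 (n + 1) ∈ aggFamily (C1 n) := by
  refine ⟨fun r => {(r : ℕ) + 2}, fun r => by simp [C1], ?_⟩
  ext j
  simp only [Finset.mem_Icc, Finset.mem_sup, Finset.mem_univ, true_and, Finset.mem_singleton]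
  constructor
  · rintro ⟨h2, hj⟩
    exact ⟨⟨j - 2, by omega⟩, by simp only; omega⟩
  · rintro ⟨r, rfl⟩
    have := r.isLt
    omega

theorem sum_Icc_one_two_mul {n : ℕ} (hn : 0 < n) (x : ℕ → ℝ) :
    ∑ j ∈ Finset.Icc 1 (2 * n), x j =
      x 1 + ∑ j ∈ Finset.Icc 2 (n + 1), x j + ∑ j ∈ Finset.Icc (n + 2) (2 * n), x j := by
  have hsplit : Finset.Icc 1 (2 * n) =
      insert 1 (Finset.Icc 2 (n + 1) ∪ Finset.Icc (n + 2) (2 * n)) := by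
    ext j
    simp only [Finset.mem_Icc, Finset.mem_insert, Finset.mem_union]
    omega
  have hdisj : Disjoint (Finset.Icc 2 (n + 1)) (Finset.Icc (n + 2) (2 * n)) := by
    rw [Finset.disjoint_left]
    intro j
    simp only [Finset.mem_Icc]
    omega
  rw [hsplit, Finset.sum_insert (by simp), Finset.sum_union hdisj, add_assoc]

/-- The nodes are partitioned into `n + 1` members of the aggregated family. -/
theorem succ_mul_le_sum_of_aggFamily_C1 {n : ℕ} (hn : 0 < n) {x : ℕ → ℝ} {y : ℝ}
    (hy : ∀ S ∈ aggFamily (C1 n), y ≤ ∑ j ∈ S, x j) :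
    ((n : ℝ) + 1) * y ≤ ∑ j ∈ Finset.Icc 1 (2 * n), x j := by
  have : Nonempty (Fin n) := ⟨⟨0, hn⟩⟩
  have hhub : y ≤ x 1 := by
    simpa using hy {1} (mem_aggFamily_of_forall_mem fun r => by simp [C1])
  have htail : ((n : ℝ) - 1) * y ≤ ∑ j ∈ Finset.Icc (n + 2) (2 * n), x j := by
    have hcard : (Finset.Icc (n + 2) (2 * n)).card = n - 1 := by
      rw [Nat.card_Icc]
      omega
    have h := Finset.card_nsmul_le_sum (Finset.Icc (n + 2) (2 * n)) x y fun k hk => by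
      simpa using hy {k} (mem_aggFamily_of_forall_mem fun r => by
        simp only [C1, Finset.mem_insert, Finset.mem_image]
        exact Or.inr (Or.inr ⟨k, hk, rfl⟩))
    rwa [hcard, nsmul_eq_mul, Nat.cast_pred hn] at h
  rw [sum_Icc_one_two_mul hn]
  linarith [hy _ (Icc_mem_aggFamily_C1 n)]

theorem vagg_C1_le {n : ℕ} (hn : 0 < n) {f : ℝ} (hf : 0 ≤ f) {x : ℕ → ℝ}
    (hx : ∑ j ∈ Finset.Icc 1 (2 * n), x j ≤ 2) :
    vagg (aggFamily (C1 n)) f x ≤ f * (2 / ((n : ℝ) + 1)) := by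
  refine Real.sSup_le ?_ (by positivity)
  rintro t ⟨y, -, hy, rfl⟩
  gcongr
  rw [le_div_iff₀' (by positivity)]
  exact (succ_mul_le_sum_of_aggFamily_C1 hn hy).trans hx

theorem mul_sum_le_vdisagg {N R : Type*} [Fintype R] {C : R → Finset (Finset N)} {f : ℝ}
    (hf : 0 ≤ f) {x : N → ℝ} {z : R → ℝ} (hz : ∀ r, z r ∈ Set.Icc (0 : ℝ) 1)
    (hsum : ∑ r, z r ≤ 1) (hcut : ∀ r, ∀ S ∈ C r, z r ≤ ∑ j ∈ S, x j) :
    f * ∑ r, z r ≤ vdisagg C f x := by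
  refine le_csSup ⟨f, ?_⟩ ⟨z, hz, hsum, hcut, rfl⟩
  rintro t ⟨w, -, hw, -, rfl⟩
  exact mul_le_of_le_one_right hf hw

theorem vdisagg_le {N R : Type*} [Fintype R] (C : R → Finset (Finset N)) {f : ℝ}
    (hf : 0 ≤ f) (x : N → ℝ) : vdisagg C f x ≤ f := by
  refine Real.sSup_le ?_ hf
  rintro t ⟨w, -, hw, -, rfl⟩
  exact mul_le_of_le_one_right hf hw

/-- The uniform point attains the full demand in the disaggregated formulation. -/
theorem le_vdisagg_C1_uniform {n : ℕ} (hn : 0 < n) {f : ℝ} (hf : 0 ≤ f) :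
    f ≤ vdisagg (C1 n) f fun _ => (n : ℝ)⁻¹ := by
  have hn' : (n : ℝ) ≠ 0 := by positivity
  have hsum : ∑ _r : Fin n, (n : ℝ)⁻¹ = 1 := by simp [hn']
  have h := mul_sum_le_vdisagg (C := C1 n) (x := fun _ => (n : ℝ)⁻¹) hf
    (fun _ => ⟨by positivity, Nat.cast_inv_le_one n⟩) hsum.le ?_
  · rwa [hsum, mul_one] at h
  · intro r S hS
    simp only [C1, Finset.mem_insert, Finset.mem_image] at hS
    rcases hS with rfl | rfl | ⟨k, -, rfl⟩ <;> simp

/-- Proposition 4(i) of the paper.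
For `γ > 1` and `n` with `n + 1 > 2γ`, on the explicit instance `C1 n` with budget set
`X̄ = {x ∈ [0,1]^{2n} : ∑_{j=1}^{2n} x_j ≤ 2}`, the LP bound from the aggregated
formulation times `γ` is still at most the LP bound from the disaggregated one. -/
theorem stmt_13 (γ : ℝ) (hγ : 1 < γ) (n : ℕ) (hn : 0 < n)
    (hnγ : 2 * γ < (n : ℝ) + 1) (f : ℝ) (hf : 0 < f) :
    γ * sSup {t | ∃ x : ℕ → ℝ,
        (∀ j ∈ Finset.Icc 1 (2 * n), x j ∈ Set.Icc (0 : ℝ) 1) ∧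
        (∑ j ∈ Finset.Icc 1 (2 * n), x j) ≤ 2 ∧
        t = vagg (aggFamily (C1 n)) f x}
      ≤ sSup {t | ∃ x : ℕ → ℝ,
        (∀ j ∈ Finset.Icc 1 (2 * n), x j ∈ Set.Icc (0 : ℝ) 1) ∧
        (∑ j ∈ Finset.Icc 1 (2 * n), x j) ≤ 2 ∧
        t = vdisagg (C1 n) f x} := by
  have hagg : ∀ t ∈ {t | ∃ x : ℕ → ℝ,
      (∀ j ∈ Finset.Icc 1 (2 * n), x j ∈ Set.Icc (0 : ℝ) 1) ∧
      (∑ j ∈ Finset.Icc 1 (2 * n), x j) ≤ 2 ∧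
      t = vagg (aggFamily (C1 n)) f x}, t ≤ f * (2 / ((n : ℝ) + 1)) := by
    rintro t ⟨x, -, hx, rfl⟩
    exact vagg_C1_le hn hf.le hx
  calc _ ≤ γ * (f * (2 / ((n : ℝ) + 1))) :=
        mul_le_mul_of_nonneg_left (Real.sSup_le hagg (by positivity)) (by linarith)
    _ = f * (2 * γ / ((n : ℝ) + 1)) := by ring
    _ ≤ f := mul_le_of_le_one_right hf.le ((div_le_one (by positivity)).2 hnγ.le)
    _ ≤ vdisagg (C1 n) f fun _ => (n : ℝ)⁻¹ := le_vdisagg_C1_uniform hn hf.le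
    _ ≤ _ := by
      refine le_csSup ⟨f, ?_⟩ ⟨_, fun _ _ => ⟨by positivity, Nat.cast_inv_le_one n⟩, ?_, rfl⟩
      · rintro t ⟨x, -, -, rfl⟩
        exact vdisagg_le _ hf.le x
      · have hn' : (n : ℝ) ≠ 0 := by positivity
        simp [hn']
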